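/- Let G be a finite simple graph on n vertices with minimum degree δ and average degree d̄ > 0, and let λ be the minimum eigenvalue of the adjacency matrix of G. If there exists an independent set S such that every vertex in S has degree δ and every vertex i ∉ S is adjacent to exactly −λ·(d_i − λ)/(δ − λ) vertices of S, then α(G) = −λ·n·(d̄ − λ) / (δ − λ)² and |S| = α(G). -/

import Mathlib

/-! The argument is the Hoffman ratio bound for the positive semidefinite form of `M = A - λI`.
For an independent set `T` with indicator `t`, one has `tᵀMt = -λ|T|`, `tᵀM𝟙 = ∑_{i ∈ T} (d_i - λ)`,
which is at least `(δ - λ)|T|`, and `𝟙ᵀM𝟙 = ∑ (d_i - λ)`. Evaluating the form at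
`(δ - λ) t + λ 𝟙` gives `|T| (δ - λ)² ≤ -λ ∑ (d_i - λ)`. The hypothesis on `S` says exactly that
this vector lies in the kernel of `M` when `T = S`; pairing with `𝟙` shows that `S` attains
the bound. The sign condition `λ < 0` comes from evaluating the form at `e_u - e_v` for an edge `uv`. -/

open Matrix in
/-- The Rayleigh bound: `A - λI` is positive semidefinite when `λ` is the least eigenvalue of `A`. -/
lemma isLeast_spectrum_rayleigh {V : Type*} [Fintype V] [DecidableEq V] {A : Matrix V V ℝ}
    (hA : A.IsHermitian) {lam : ℝ} (hlam : IsLeast (spectrum ℝ A) lam) (x : V → ℝ) :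
    lam * (x ⬝ᵥ x) ≤ x ⬝ᵥ (A *ᵥ x) := by
  have hM : (A - algebraMap ℝ (Matrix V V ℝ) lam).PosSemidef := by
    rw [posSemidef_iff_isHermitian_and_spectrum_nonneg]
    refine ⟨?_, ?_⟩
    · exact hA.sub (by simp [Matrix.IsHermitian, algebraMap_eq_diagonal])
    · intro m hm
      rw [← spectrum.sub_singleton_eq] at hm
      obtain ⟨m', hm', _, rfl, rfl⟩ := Set.mem_sub.1 hm
      simpa using hlam.2 hm'
  have h := hM.dotProduct_mulVec_nonneg x
  simp only [star_trivial, sub_mulVec, dotProduct_sub, Algebra.algebraMap_eq_smul_one, smul_mulVec,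
    one_mulVec, dotProduct_smul, smul_eq_mul] at h
  linarith

/-- The least adjacency eigenvalue of a graph with an edge is negative. -/
lemma least_adj_eigenvalue_neg {V : Type*} [Fintype V] [DecidableEq V]
    (G : SimpleGraph V) [DecidableRel G.Adj] {lam : ℝ}
    (hlam : IsLeast (spectrum ℝ (G.adjMatrix ℝ)) lam) {u v : V} (h : G.Adj u v) : lam < 0 := by
  have := isLeast_spectrum_rayleigh (by simp [Matrix.IsHermitian]) hlam
    (Pi.single u 1 - Pi.single v 1)
  simp [Matrix.mulVec_sub, sub_dotProduct, dotProduct_sub, h, h.symm, h.ne, h.ne'] at this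
  linarith

/-- Nonnegativity of the quadratic form of `A - λI` at `a t + b 𝟙`, where `t` is the indicator of
an independent set `T`. -/
lemma independent_form_nonneg {V : Type*} [Fintype V] [DecidableEq V]
    (G : SimpleGraph V) [DecidableRel G.Adj] {lam : ℝ}
    (hlam : IsLeast (spectrum ℝ (G.adjMatrix ℝ)) lam) {T : Finset V}
    (hT : ∀ u ∈ T, ∀ v ∈ T, ¬ G.Adj u v) (a b : ℝ) :
    0 ≤ -lam * a ^ 2 * T.card + 2 * a * b * ∑ i ∈ T, ((G.degree i : ℝ) - lam) +
      b ^ 2 * ∑ i, ((G.degree i : ℝ) - lam) := by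
  set t : V → ℝ := fun i => if i ∈ T then 1 else 0 with ht
  set e : V → ℝ := fun _ => 1 with he
  have key := isLeast_spectrum_rayleigh (by simp [Matrix.IsHermitian]) hlam (a • t + b • e)
  have htt : t ⬝ᵥ t = T.card := by simp [ht, dotProduct]
  have hte : t ⬝ᵥ e = T.card := by simp [ht, he, dotProduct]
  have hee : e ⬝ᵥ e = Fintype.card V := by simp [he, dotProduct]
  have hAtt : t ⬝ᵥ (G.adjMatrix ℝ).mulVec t = 0 := by
    refine Finset.sum_eq_zero fun i _ => ?_
    by_cases hi : i ∈ T
    · have : (G.adjMatrix ℝ).mulVec t i = 0 := by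
        rw [SimpleGraph.adjMatrix_mulVec_apply]
        refine Finset.sum_eq_zero fun j hj => ?_
        have : j ∉ T := fun hjT => hT i hi j hjT (by simpa using hj)
        simp [ht, this]
      simp [this]
    · simp [ht, hi]
  have hAe : (G.adjMatrix ℝ).mulVec e = fun i => (G.degree i : ℝ) := by
    ext i
    simp [he, SimpleGraph.adjMatrix_mulVec_apply]
  have hAte : t ⬝ᵥ (G.adjMatrix ℝ).mulVec e = ∑ i ∈ T, (G.degree i : ℝ) := by
    rw [hAe]
    simp [ht, dotProduct]
  have hAet : e ⬝ᵥ (G.adjMatrix ℝ).mulVec t = ∑ i ∈ T, (G.degree i : ℝ) := by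
    rw [← hAte, Matrix.dotProduct_mulVec, ← Matrix.mulVec_transpose,
      SimpleGraph.transpose_adjMatrix, dotProduct_comm]
  have hAee : e ⬝ᵥ (G.adjMatrix ℝ).mulVec e = ∑ i, (G.degree i : ℝ) := by
    rw [hAe]
    simp [he, dotProduct]
  simp only [Matrix.mulVec_add, Matrix.mulVec_smul, add_dotProduct, dotProduct_add,
    smul_dotProduct, dotProduct_smul, smul_eq_mul, htt, hte, hee, dotProduct_comm e t,
    hAtt, hAte, hAet, hAee] at key
  simp only [Finset.sum_sub_distrib, Finset.sum_const, nsmul_eq_mul, Finset.card_univ]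
  linarith

/-- **Ratio bound for the independence number: sufficiency of the equality condition**
(Corollary 4.1). If there is an independent set `S` in which every vertex has degree `δ`
and such that every vertex `i ∉ S` is adjacent to exactly `−λ(d_i − λ)/(δ − λ)` vertices
of `S`, then `α(G) = −λ·n·(d̄ − λ)/(δ − λ)²` and `|S| = α(G)`. -/
theorem independence_number_ratio_bound_equality_of_condition
    {V : Type*} [Fintype V] [Nonempty V] [DecidableEq V]
    (G : SimpleGraph V) [DecidableRel G.Adj]
    (δ : ℕ) (hδ : IsLeast (Set.range fun v : V => G.degree v) δ)
    (dbar : ℝ) (hdbar : dbar = (∑ v, (G.degree v : ℝ)) / Fintype.card V)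
    (hdbar_pos : 0 < dbar)
    (lam : ℝ) (hlam : IsLeast (spectrum ℝ (G.adjMatrix ℝ)) lam)
    (α : ℕ)
    (hα : IsGreatest {c : ℕ | ∃ S : Finset V,
      (∀ u ∈ S, ∀ v ∈ S, ¬ G.Adj u v) ∧ S.card = c} α)
    (S : Finset V)
    (hSindep : ∀ u ∈ S, ∀ v ∈ S, ¬ G.Adj u v)
    (hSdeg : ∀ v ∈ S, G.degree v = δ)
    (hout : ∀ i ∉ S, ((S.filter fun j => G.Adj i j).card : ℝ) =
      -lam * ((G.degree i : ℝ) - lam) / (δ - lam)) :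
    (α : ℝ) = -lam * Fintype.card V * (dbar - lam) / (δ - lam) ^ 2 ∧
    S.card = α := by
  have hn : (0 : ℝ) < Fintype.card V := by exact_mod_cast Fintype.card_pos
  have hsum : ∑ v, (G.degree v : ℝ) = Fintype.card V * dbar := by
    rw [hdbar]; field_simp
  have hlam0 : lam < 0 := by
    by_contra hcon
    have hno : ∀ u, G.degree u = 0 := by
      intro u
      rw [← SimpleGraph.card_neighborFinset_eq_degree, Finset.card_eq_zero,
        Finset.eq_empty_iff_forall_notMem]
      intro v hv
      exact hcon (least_adj_eigenvalue_neg G hlam (by simpa using hv))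
    simp [hno] at hdbar
    exact hdbar_pos.ne' hdbar
  have hD : 0 < (δ : ℝ) - lam := by
    have : (0 : ℝ) ≤ δ := by positivity
    linarith
  have hQ : ∑ i, ((G.degree i : ℝ) - lam) = Fintype.card V * (dbar - lam) := by
    simp [Finset.sum_sub_distrib, hsum]; ring
  have bound : ∀ T : Finset V, (∀ u ∈ T, ∀ v ∈ T, ¬ G.Adj u v) →
      (T.card : ℝ) ≤ -lam * Fintype.card V * (dbar - lam) / (δ - lam) ^ 2 := by
    intro T hT
    have h := independent_form_nonneg G hlam hT ((δ : ℝ) - lam) lam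
    have hP : T.card * ((δ : ℝ) - lam) ≤ ∑ i ∈ T, ((G.degree i : ℝ) - lam) := by
      rw [← nsmul_eq_mul]
      refine Finset.card_nsmul_le_sum _ _ _ fun i _ => ?_
      have : (δ : ℝ) ≤ G.degree i := by exact_mod_cast hδ.2 ⟨i, rfl⟩
      linarith
    rw [hQ] at h
    rw [le_div_iff₀ (by positivity)]
    have h2 := mul_le_mul_of_nonneg_left hP (mul_nonneg (neg_nonneg.2 hlam0.le) hD.le)
    -- By `hP`, the form is at most `-lam` times the difference of the two sides of the goal.
    have h3 : 0 ≤ -lam * (-lam * Fintype.card V * (dbar - lam) - T.card * (δ - lam) ^ 2) := by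
      linarith
    linarith [nonneg_of_mul_nonneg_right h3 (neg_pos.2 hlam0)]
  have hS : (S.card : ℝ) = -lam * Fintype.card V * (dbar - lam) / (δ - lam) ^ 2 := by
    have hrow : ∀ i, ((S.filter fun j => G.Adj i j).card : ℝ) - (if i ∈ S then lam else 0) =
        -lam / (δ - lam) * ((G.degree i : ℝ) - lam) := by
      intro i
      by_cases hi : i ∈ S
      · have : (S.filter fun j => G.Adj i j) = ∅ :=
          Finset.filter_eq_empty_iff.2 fun j hj => hSindep i hi j hj
        rw [this, hSdeg i hi, div_mul_cancel₀ _ hD.ne']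
        simp [hi]
      · rw [hout i hi]
        simp [hi]
        ring
    have hcount : ∑ i, ((S.filter fun j => G.Adj i j).card : ℝ) = S.card * δ := by
      simp only [Finset.card_filter, Nat.cast_sum, Nat.cast_ite, Nat.cast_one, Nat.cast_zero]
      rw [Finset.sum_comm, ← nsmul_eq_mul]
      refine Finset.sum_eq_card_nsmul fun j hj => ?_
      rw [← hSdeg j hj, ← SimpleGraph.card_neighborFinset_eq_degree,
        SimpleGraph.neighborFinset_eq_filter]
      simp [G.adj_comm]
    -- Summing over all rows pairs the kernel relation with the all-ones vector.
    have htot := Finset.sum_congr (rfl : Finset.univ = Finset.univ) fun i _ => hrow i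
    rw [Finset.sum_sub_distrib, hcount, ← Finset.mul_sum, hQ] at htot
    simp at htot
    rw [eq_div_iff (by positivity)]
    field_simp at htot
    linarith
  have hcard : S.card = α := by
    obtain ⟨T, hT, hTα⟩ := hα.1
    refine le_antisymm (hα.2 ⟨S, hSindep, rfl⟩) ?_
    have := bound T hT
    rw [← hS, hTα] at this
    exact_mod_cast this
  exact ⟨hcard ▸ hS, hcard⟩
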